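/- For every smooth character χ of T, the extension group Ext^1 of the one-dimensional module ℂ_χ by 𝕊 in the category of smooth TS-modules is one-dimensional, spanned by the class of 𝔼[χ]: every short exact sequence 0 → 𝕊 → M → ℂ_χ → 0 of TS-modules either splits or has middle term M isomorphic to 𝔼[χ], and the sequence 0 → 𝕊 → 𝔼[χ] → ℂ_χ → 0 does not split. -/

import Mathlib

noncomputable section

open scoped Classical

namespace PSW

/-! ### The affine group `λ.b : x ↦ λ·x + b` over a field `K`. -/

@[ext]
structure Aff (K : Type*) [Field K] where
  t : Kˣ
  s : K

namespace Aff

variable {K : Type*} [Field K]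

instance : Mul (Aff K) := ⟨fun g h => ⟨g.t * h.t, g.s + (g.t : K) * h.s⟩⟩
instance : One (Aff K) := ⟨⟨1, 0⟩⟩
instance : Inv (Aff K) := ⟨fun g => ⟨g.t⁻¹, -(((g.t⁻¹ : Kˣ) : K) * g.s)⟩⟩

@[simp] lemma mul_t (g h : Aff K) : (g * h).t = g.t * h.t := rfl
@[simp] lemma mul_s (g h : Aff K) : (g * h).s = g.s + (g.t : K) * h.s := rfl
@[simp] lemma one_t : (1 : Aff K).t = 1 := rfl
@[simp] lemma one_s : (1 : Aff K).s = 0 := rfl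
@[simp] lemma inv_t (g : Aff K) : (g⁻¹).t = g.t⁻¹ := rfl
@[simp] lemma inv_s (g : Aff K) : (g⁻¹).s = -(((g.t⁻¹ : Kˣ) : K) * g.s) := rfl

instance : Group (Aff K) where
  mul_assoc a b c := by
    ext
    · simp [mul_assoc]
    · simp only [mul_s, mul_t, Units.val_mul]; ring
  one_mul a := by ext <;> simp
  mul_one a := by ext <;> simp
  inv_mul_cancel a := by
    ext
    · simp
    · simp

/-- The element `x_λ` of the group `TS`. -/
def xT (u : Kˣ) : Aff K := ⟨u, 0⟩

/-- The element `s_b` of the group `TS`. -/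
def sS (b : K) : Aff K := ⟨1, b⟩

@[simp] lemma xT_t (u : Kˣ) : (xT u : Aff K).t = u := rfl
@[simp] lemma xT_s (u : Kˣ) : (xT u : Aff K).s = 0 := rfl
@[simp] lemma sS_t (b : K) : (sS b : Aff K).t = 1 := rfl
@[simp] lemma sS_s (b : K) : (sS b : Aff K).s = b := rfl

/-- `T ≅ k^×` as a subgroup of `TS`. -/
def xTHom : Kˣ →* Aff K where
  toFun := xT
  map_one' := rfl
  map_mul' u v := by ext <;> simp [xT]

@[simp] lemma xTHom_apply (u : Kˣ) : (xTHom u : Aff K) = xT u := rfl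

lemma mul_sS (g : Aff K) (b : K) : g * sS b = sS ((g.t : K) * b) * g := by
  ext
  · simp
  · simp [add_comm]

lemma sS_mul (b : K) (g : Aff K) : sS b * g = g * sS (((g.t⁻¹ : Kˣ) : K) * b) := by
  ext
  · simp
  · simp [Units.mul_inv_cancel_left, add_comm]

lemma aff_decomp (g : Aff K) : g = xT g.t * sS (((g.t⁻¹ : Kˣ) : K) * g.s) := by
  ext
  · simp
  · simp [Units.mul_inv_cancel_left]

instance [TopologicalSpace K] : TopologicalSpace (Aff K) :=
  TopologicalSpace.induced (fun g : Aff K => ((g.t, g.s) : Kˣ × K)) inferInstance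

end Aff

/-! ### Generalities on representations of a monoid on complex vector spaces. -/

namespace GRep

variable {G : Type*} [Monoid G]

section MonoidModules

variable {V W : Type*} [AddCommMonoid V] [Module ℂ V] [AddCommMonoid W] [Module ℂ W]

/-- A submodule invariant under the representation. -/
def Invariant (ρ : Representation ℂ G V) (U : Submodule ℂ V) : Prop :=
  ∀ (g : G) (v : V), v ∈ U → ρ g v ∈ U

/-- Equivariance of a linear map with respect to two representations. -/
def Equivariant (ρ : Representation ℂ G V) (σ : Representation ℂ G W) (f : V →ₗ[ℂ] W) : Prop :=
  ∀ (g : G) (v : V), f (ρ g v) = σ g (f v)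

/-- Isomorphism of representations. -/
def Iso (ρ : Representation ℂ G V) (σ : Representation ℂ G W) : Prop :=
  ∃ e : V ≃ₗ[ℂ] W, ∀ (g : G) (v : V), e (ρ g v) = σ g (e v)

/-- Irreducibility. -/
def Irred (ρ : Representation ℂ G V) : Prop :=
  Nontrivial V ∧ ∀ U : Submodule ℂ V, Invariant ρ U → U = ⊥ ∨ U = ⊤

/-- Subrepresentation on an invariant submodule. -/
def sub (ρ : Representation ℂ G V) {U : Submodule ℂ V} (hU : Invariant ρ U) :
    Representation ℂ G ↥U where
  toFun g := (ρ g).restrict fun v hv => hU g v hv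
  map_one' := by
    apply LinearMap.ext; intro v; apply Subtype.ext
    simp [LinearMap.restrict_apply]
  map_mul' g h := by
    apply LinearMap.ext; intro v; apply Subtype.ext
    simp [LinearMap.restrict_apply]

@[simp] lemma sub_apply (ρ : Representation ℂ G V) {U : Submodule ℂ V} (hU : Invariant ρ U)
    (g : G) (v : ↥U) : ((sub ρ hU g v : ↥U) : V) = ρ g (v : V) := rfl

lemma ker_invariant (ρ : Representation ℂ G V) (σ : Representation ℂ G W)
    (f : V →ₗ[ℂ] W) (hf : Equivariant ρ σ f) : Invariant ρ (LinearMap.ker f) := by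
  intro g v hv
  rw [LinearMap.mem_ker] at hv ⊢
  rw [hf g v, hv, map_zero]

lemma range_invariant (ρ : Representation ℂ G V) (σ : Representation ℂ G W)
    (f : V →ₗ[ℂ] W) (hf : Equivariant ρ σ f) : Invariant σ (LinearMap.range f) := by
  rintro g w ⟨v, rfl⟩
  exact ⟨ρ g v, hf g v⟩

lemma map_invariant (ρ : Representation ℂ G V) (σ : Representation ℂ G W)
    (f : V →ₗ[ℂ] W) (hf : Equivariant ρ σ f) (U : Submodule ℂ V) (hU : Invariant ρ U) :
    Invariant σ (U.map f) := by
  rintro g w ⟨v, hv, rfl⟩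
  exact ⟨ρ g v, hU g v hv, hf g v⟩

end MonoidModules

section GroupModules

variable {V W : Type*} [AddCommGroup V] [Module ℂ V] [AddCommGroup W] [Module ℂ W]

/-- Quotient representation. -/
def quot (ρ : Representation ℂ G V) (U : Submodule ℂ V) (hU : Invariant ρ U) :
    Representation ℂ G (V ⧸ U) where
  toFun g := U.mapQ U (ρ g) fun v hv => hU g v hv
  map_one' := by
    apply LinearMap.ext; intro x
    obtain ⟨v, rfl⟩ := Submodule.Quotient.mk_surjective U x
    simp [Submodule.mapQ_apply]
  map_mul' g h := by
    apply LinearMap.ext; intro x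
    obtain ⟨v, rfl⟩ := Submodule.Quotient.mk_surjective U x
    simp [Submodule.mapQ_apply]

@[simp] lemma quot_apply (ρ : Representation ℂ G V) (U : Submodule ℂ V) (hU : Invariant ρ U)
    (g : G) (v : V) :
    quot ρ U hU g (Submodule.Quotient.mk v) = Submodule.Quotient.mk (ρ g v) := rfl

/-- Subquotient representation on `B/A`. -/
def subquot (ρ : Representation ℂ G V) {A B : Submodule ℂ V}
    (hA : Invariant ρ A) (hB : Invariant ρ B) :
    Representation ℂ G (↥B ⧸ A.comap B.subtype) :=
  quot (sub ρ hB) (A.comap B.subtype) fun g v hv => hA g v.1 hv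

lemma mkQ_equivariant (ρ : Representation ℂ G V) (U : Submodule ℂ V) (hU : Invariant ρ U) :
    Equivariant ρ (quot ρ U hU) U.mkQ := by
  intro g v
  show Submodule.Quotient.mk (ρ g v) = quot ρ U hU g (Submodule.Quotient.mk v)
  rw [quot_apply]

end GroupModules

end GRep

/-! ### TS-modules: representations of the affine group. -/

/-- A `TS`-module structure on `V` is a representation of the group `TS ≅ Gl_a(1)`. -/
abbrev Rep (K : Type*) [Field K] (V : Type*) [AddCommGroup V] [Module ℂ V] :=
  Representation ℂ (Aff K) V

section RepDefs

open Aff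

variable {K : Type*} [Field K]
variable {V W : Type*} [AddCommGroup V] [Module ℂ V] [AddCommGroup W] [Module ℂ W]

/-- Smoothness: every vector has open stabilizer. -/
def IsSmoothRep [TopologicalSpace K] (ρ : Rep K V) : Prop :=
  ∀ v : V, IsOpen {g : Aff K | ρ g v = v}

/-- Smoothness of a `T`-module, i.e. of a representation of `T ≅ k^×`. -/
def TIsSmooth {X : Type*} [AddCommMonoid X] [Module ℂ X] [TopologicalSpace K]
    (τ : Representation ℂ Kˣ X) : Prop :=
  ∀ x : X, IsOpen {u : Kˣ | τ u x = x}

/-- Smooth character of `T ≅ k^×` (open kernel, equivalently locally constant). -/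
def SmoothMulChar [TopologicalSpace K] (χ : Kˣ →* ℂˣ) : Prop :=
  IsOpen {u : Kˣ | χ u = 1}

/-- The space `V^S` of `S`-invariants. -/
def sInv (ρ : Rep K V) : Submodule ℂ V where
  carrier := {v | ∀ b : K, ρ (sS b) v = v}
  zero_mem' := fun b => map_zero _
  add_mem' {a b} ha hb := fun c => by rw [map_add, ha c, hb c]
  smul_mem' c v hv := fun b => by rw [map_smul, hv b]

@[simp] lemma mem_sInv (ρ : Rep K V) (v : V) :
    v ∈ sInv ρ ↔ ∀ b : K, ρ (sS b) v = v := Iff.rfl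

/-- The `χ`-eigenspace `X^{T,χ}` of a `T`-module. -/
def tEigenT {X : Type*} [AddCommMonoid X] [Module ℂ X]
    (τ : Representation ℂ Kˣ X) (χ : Kˣ →* ℂˣ) : Submodule ℂ X where
  carrier := {x | ∀ u : Kˣ, τ u x = (χ u : ℂ) • x}
  zero_mem' := fun u => by simp
  add_mem' {a b} ha hb := fun u => by rw [map_add, ha u, hb u, smul_add]
  smul_mem' c x hx := fun u => by rw [map_smul, hx u]; exact smul_comm c ((χ u : ℂ)) x

@[simp] lemma mem_tEigenT {X : Type*} [AddCommMonoid X] [Module ℂ X]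
    (τ : Representation ℂ Kˣ X) (χ : Kˣ →* ℂˣ) (x : X) :
    x ∈ tEigenT τ χ ↔ ∀ u : Kˣ, τ u x = (χ u : ℂ) • x := Iff.rfl

/-- The `χ`-eigenspace `V^{T,χ}` of a `TS`-module. -/
def tEigen (ρ : Rep K V) (χ : Kˣ →* ℂˣ) : Submodule ℂ V := tEigenT (ρ.comp xTHom) χ

/-- The kernel of the projection to the `S`-coinvariants `V_S`. -/
def sCoinvKer (ρ : Rep K V) : Submodule ℂ V :=
  Submodule.span ℂ {w : V | ∃ (b : K) (v : V), w = ρ (sS b) v - v}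

/-- The kernel of the projection to the twisted coinvariants `V_{S,ψ'}`. -/
def sTwistKer (ρ : Rep K V) (ψ' : AddChar K ℂ) : Submodule ℂ V :=
  Submodule.span ℂ {w : V | ∃ (b : K) (v : V), w = ρ (sS b) v - ψ' b • v}

/-- The kernel of the projection to the `χ`-coinvariants `X_{T,χ}` of a `T`-module. -/
def tTwistKerT {X : Type*} [AddCommGroup X] [Module ℂ X]
    (τ : Representation ℂ Kˣ X) (χ : Kˣ →* ℂˣ) : Submodule ℂ X :=
  Submodule.span ℂ {w : X | ∃ (u : Kˣ) (x : X), w = τ u x - (χ u : ℂ) • x}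

/-- The kernel of the projection to the `χ`-coinvariants `V_{T,χ}` of a `TS`-module. -/
def tTwistKer (ρ : Rep K V) (χ : Kˣ →* ℂˣ) : Submodule ℂ V := tTwistKerT (ρ.comp xTHom) χ

lemma sCoinvKer_invariant (ρ : Rep K V) : GRep.Invariant ρ (sCoinvKer ρ) := by
  intro g v hv
  have h : sCoinvKer ρ ≤ Submodule.comap (ρ g) (sCoinvKer ρ) := by
    refine Submodule.span_le.2 ?_
    rintro w ⟨b, v', rfl⟩
    simp only [SetLike.mem_coe, Submodule.mem_comap, map_sub]
    have h1 : ρ g (ρ (sS b) v') = ρ (sS ((g.t : K) * b)) (ρ g v') := by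
      rw [← Module.End.mul_apply, ← map_mul, mul_sS, map_mul, Module.End.mul_apply]
    rw [h1]
    exact Submodule.subset_span ⟨(g.t : K) * b, ρ g v', rfl⟩
  exact h hv

lemma sInv_invariant (ρ : Rep K V) : GRep.Invariant ρ (sInv ρ) := by
  intro g v hv
  rw [mem_sInv] at hv ⊢
  intro b
  have h1 : ρ (sS b) (ρ g v) = ρ g (ρ (sS (((g.t⁻¹ : Kˣ) : K) * b)) v) := by
    rw [← Module.End.mul_apply, ← map_mul, sS_mul, map_mul, Module.End.mul_apply]
  rw [h1, hv _]

/-- The `S`-coinvariants `π₀(V) = V_S` as a `TS`-module (`S` acting trivially). -/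
def piZeroRep (ρ : Rep K V) : Rep K (V ⧸ sCoinvKer ρ) :=
  GRep.quot ρ (sCoinvKer ρ) (sCoinvKer_invariant ρ)

/-- The `S`-coinvariants `π₀(V) = V_S` as a `T`-module. -/
def piZeroT (ρ : Rep K V) : Representation ℂ Kˣ (V ⧸ sCoinvKer ρ) :=
  (piZeroRep ρ).comp xTHom

/-- The `T`-module structure on `κ(V) = V^S`. -/
def sInvT (ρ : Rep K V) : Representation ℂ Kˣ ↥(sInv ρ) :=
  (GRep.sub ρ (sInv_invariant ρ)).comp xTHom

/-- A `TS`-module is perfect if all its eigenspaces `V^{T,χ}` for smooth `χ` vanish. -/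
def Perfect [TopologicalSpace K] (ρ : Rep K V) : Prop :=
  ∀ χ : Kˣ →* ℂˣ, SmoothMulChar χ → tEigen ρ χ = ⊥

/-- A finite-dimensional `T`-module is cyclic if each generalized eigenspace is a single
Jordan block; equivalently all eigenspaces `X^{T,χ}` have dimension at most one. -/
def TCyclic {X : Type*} [AddCommGroup X] [Module ℂ X]
    (τ : Representation ℂ Kˣ X) : Prop :=
  ∀ χ : Kˣ →* ℂˣ, Module.finrank ℂ ↥(tEigenT τ χ) ≤ 1

lemma sCoinvKer_le_comap (ρ : Rep K V) (σ : Rep K W)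
    (f : V →ₗ[ℂ] W) (hf : GRep.Equivariant ρ σ f) :
    sCoinvKer ρ ≤ (sCoinvKer σ).comap f := by
  refine Submodule.span_le.2 ?_
  rintro w ⟨b, v, rfl⟩
  simp only [SetLike.mem_coe, Submodule.mem_comap, map_sub]
  rw [hf]
  exact Submodule.subset_span ⟨b, f v, rfl⟩

/-- The map induced by an equivariant map on the `S`-coinvariants `π₀`. -/
def piZeroMap (ρ : Rep K V) (σ : Rep K W) (f : V →ₗ[ℂ] W) (hf : GRep.Equivariant ρ σ f) :
    (V ⧸ sCoinvKer ρ) →ₗ[ℂ] (W ⧸ sCoinvKer σ) :=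
  Submodule.mapQ _ _ f (sCoinvKer_le_comap ρ σ f hf)

lemma piZeroMap_equivariant (ρ : Rep K V) (σ : Rep K W) (f : V →ₗ[ℂ] W)
    (hf : GRep.Equivariant ρ σ f) :
    GRep.Equivariant (piZeroRep ρ) (piZeroRep σ) (piZeroMap ρ σ f hf) := by
  intro g x
  obtain ⟨v, rfl⟩ := Submodule.Quotient.mk_surjective _ x
  show piZeroMap ρ σ f hf (piZeroRep ρ g (Submodule.Quotient.mk v))
      = piZeroRep σ g (piZeroMap ρ σ f hf (Submodule.Quotient.mk v))
  rw [show piZeroRep ρ g (Submodule.Quotient.mk v) = Submodule.Quotient.mk (ρ g v) from rfl]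
  rw [show piZeroMap ρ σ f hf (Submodule.Quotient.mk v) = Submodule.Quotient.mk (f v) from rfl]
  rw [show piZeroMap ρ σ f hf (Submodule.Quotient.mk (ρ g v))
      = Submodule.Quotient.mk (f (ρ g v)) from rfl]
  rw [show piZeroRep σ g (Submodule.Quotient.mk (f v)) = Submodule.Quotient.mk (σ g (f v)) from rfl]
  rw [hf]

lemma kappaImg_invariant (ρ : Rep K V) :
    GRep.Invariant (piZeroT ρ) ((sInv ρ).map (sCoinvKer ρ).mkQ) := by
  rintro u w ⟨v, hv, rfl⟩
  refine ⟨ρ (xT u) v, sInv_invariant ρ (xT u) v hv, ?_⟩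
  rfl

end RepDefs

/-! ### Composition series and degree. -/

/-- A composition series for a `TS`-module, witnessing finite length: a maximal chain of
invariant submodules (the subquotients are then irreducible). -/
structure CompSeries {K : Type*} [Field K] {V : Type*} [AddCommGroup V] [Module ℂ V]
    (ρ : Rep K V) where
  n : ℕ
  W : ℕ → Submodule ℂ V
  bot : W 0 = ⊥
  top : W n = ⊤
  inv : ∀ i, GRep.Invariant ρ (W i)
  lt : ∀ i < n, W i < W (i + 1)
  maximal : ∀ i < n, ∀ C : Submodule ℂ V, GRep.Invariant ρ C → W i ≤ C → C ≤ W (i + 1) →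
    C = W i ∨ C = W (i + 1)

/-- The number of Jordan–Hölder constituents of a composition series isomorphic to a given
representation `σ` (applied with `σ = 𝕊`, this is the degree). -/
def CompSeries.deg {K : Type*} [Field K] {V : Type*} [AddCommGroup V] [Module ℂ V]
    {ρ : Rep K V} (c : CompSeries ρ) {W₀ : Type*} [AddCommMonoid W₀] [Module ℂ W₀]
    (σ : Representation ℂ (Aff K) W₀) : ℕ :=
  (Finset.univ.filter fun i : Fin c.n =>
    GRep.Iso (GRep.subquot ρ (c.inv i.1) (c.inv (i.1 + 1))) σ).card

/-! ### Fiber products of a `T`-module with a `TS`-module over a `T`-module. -/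

section Fiber

open Aff

variable {K : Type*} [Field K]
variable {X Y E : Type*} [AddCommGroup X] [Module ℂ X] [AddCommGroup Y] [Module ℂ Y]
  [AddCommGroup E] [Module ℂ E]

/-- The product `TS`-module `X × E` where `S` acts trivially on the `T`-module `X`. -/
def prodRepTE (τ : Representation ℂ Kˣ X) (ρ : Rep K E) : Rep K (X × E) where
  toFun g := (τ g.t).prodMap (ρ g)
  map_one' := by
    apply LinearMap.ext; rintro ⟨x, v⟩
    simp
  map_mul' g h := by
    apply LinearMap.ext; rintro ⟨x, v⟩
    simp [map_mul]

/-- The underlying space of the fiber product `𝔼[f] = X ×_Y E`. -/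
def fiberKer (f : X →ₗ[ℂ] Y) (q : E →ₗ[ℂ] Y) : Submodule ℂ (X × E) :=
  LinearMap.ker (f.comp (LinearMap.fst ℂ X E) - q.comp (LinearMap.snd ℂ X E))

lemma mem_fiberKer (f : X →ₗ[ℂ] Y) (q : E →ₗ[ℂ] Y) (p : X × E) :
    p ∈ fiberKer f q ↔ f p.1 = q p.2 := by
  simp [fiberKer, sub_eq_zero]

lemma fiber_invariant (τX : Representation ℂ Kˣ X) (ρE : Rep K E)
    (τY : Representation ℂ Kˣ Y) (f : X →ₗ[ℂ] Y) (q : E →ₗ[ℂ] Y)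
    (hf : ∀ (u : Kˣ) (x : X), f (τX u x) = τY u (f x))
    (hq : sCoinvKer ρE ≤ LinearMap.ker q)
    (hqT : ∀ (u : Kˣ) (v : E), q (ρE (xT u) v) = τY u (q v)) :
    GRep.Invariant (prodRepTE τX ρE) (fiberKer f q) := by
  intro g p hp
  rw [mem_fiberKer] at hp ⊢
  have hsb : q (ρE (sS (((g.t⁻¹ : Kˣ) : K) * g.s)) p.2) = q p.2 := by
    have h1 : ρE (sS (((g.t⁻¹ : Kˣ) : K) * g.s)) p.2 - p.2 ∈ sCoinvKer ρE :=
      Submodule.subset_span ⟨_, _, rfl⟩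
    have h2 := hq h1
    rw [LinearMap.mem_ker, map_sub, sub_eq_zero] at h2
    exact h2
  have hdecomp : ρE g p.2 = ρE (xT g.t) (ρE (sS (((g.t⁻¹ : Kˣ) : K) * g.s)) p.2) := by
    conv_lhs => rw [aff_decomp g]
    rw [map_mul, Module.End.mul_apply]
  have h1 : ((prodRepTE τX ρE) g p).1 = τX g.t p.1 := rfl
  have h2 : ((prodRepTE τX ρE) g p).2 = ρE g p.2 := rfl
  rw [h1, h2, hf, hp, hdecomp, hqT, hsb]

end Fiber

/-! ### Jordan blocks of finite-dimensional `T`-modules. -/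

section Jordan

variable {K : Type*} [Field K]
variable {X : Type*} [AddCommGroup X] [Module ℂ X]

/-- A Jordan block of a `T`-module: a nonzero indecomposable invariant direct summand. -/
def IsJordanBlock (τ : Representation ℂ Kˣ X) (J : Submodule ℂ X) : Prop :=
  J ≠ ⊥ ∧ GRep.Invariant τ J ∧ (∃ C : Submodule ℂ X, GRep.Invariant τ C ∧ IsCompl J C) ∧
    ∀ A B : Submodule ℂ X, GRep.Invariant τ A → GRep.Invariant τ B → A ≤ J → B ≤ J →
      A ⊓ B = ⊥ → A ⊔ B = J → A = ⊥ ∨ B = ⊥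

end Jordan

/-! ### Invariants and coinvariants for a normal subgroup of an arbitrary group. -/

section Grp

variable {Γ : Type*} [Group Γ]
variable {V W : Type*} [AddCommGroup V] [Module ℂ V] [AddCommGroup W] [Module ℂ W]

/-- Invariants `V^N` under a subgroup `N`. -/
def grpInv (ρ : Representation ℂ Γ V) (N : Subgroup Γ) : Submodule ℂ V where
  carrier := {v | ∀ n ∈ N, ρ n v = v}
  zero_mem' := fun n _ => map_zero _
  add_mem' {a b} ha hb := fun n hn => by rw [map_add, ha n hn, hb n hn]
  smul_mem' c v hv := fun n hn => by rw [map_smul, hv n hn]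

@[simp] lemma mem_grpInv (ρ : Representation ℂ Γ V) (N : Subgroup Γ) (v : V) :
    v ∈ grpInv ρ N ↔ ∀ n ∈ N, ρ n v = v := Iff.rfl

/-- The kernel of the projection to the coinvariants `V_N` under a subgroup `N`. -/
def grpCoinvKer (ρ : Representation ℂ Γ V) (N : Subgroup Γ) : Submodule ℂ V :=
  Submodule.span ℂ {w : V | ∃ n ∈ N, ∃ v : V, w = ρ n v - v}

lemma grpInv_invariant (ρ : Representation ℂ Γ V) (N : Subgroup Γ) [hN : N.Normal] :
    GRep.Invariant ρ (grpInv ρ N) := by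
  intro γ v hv
  rw [mem_grpInv] at hv ⊢
  intro n hn
  have hmem : γ⁻¹ * n * γ ∈ N := by
    have := hN.conj_mem n hn γ⁻¹
    simpa using this
  have key : ρ n (ρ γ v) = ρ γ (ρ (γ⁻¹ * n * γ) v) := by
    rw [← Module.End.mul_apply, ← map_mul, ← Module.End.mul_apply, ← map_mul]
    congr 1
    group
  rw [key, hv _ hmem]

lemma grpCoinvKer_invariant (ρ : Representation ℂ Γ V) (N : Subgroup Γ) [hN : N.Normal] :
    GRep.Invariant ρ (grpCoinvKer ρ N) := by
  intro γ v hv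
  have h : grpCoinvKer ρ N ≤ Submodule.comap (ρ γ) (grpCoinvKer ρ N) := by
    refine Submodule.span_le.2 ?_
    rintro w ⟨n, hn, v', rfl⟩
    simp only [SetLike.mem_coe, Submodule.mem_comap, map_sub]
    have key : ρ γ (ρ n v') = ρ (γ * n * γ⁻¹) (ρ γ v') := by
      rw [← Module.End.mul_apply, ← map_mul, ← Module.End.mul_apply, ← map_mul]
      congr 1
      group
    rw [key]
    exact Submodule.subset_span ⟨γ * n * γ⁻¹, hN.conj_mem n hn γ, ρ γ v', rfl⟩
  exact h hv

/-- The map induced on `N`-invariants by an equivariant map. -/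
def grpInvRestrict (ρ : Representation ℂ Γ V) (σ : Representation ℂ Γ W) (N : Subgroup Γ)
    (f : V →ₗ[ℂ] W) (hf : GRep.Equivariant ρ σ f) : ↥(grpInv ρ N) →ₗ[ℂ] ↥(grpInv σ N) :=
  f.restrict (fun v hv => by
    rw [mem_grpInv] at hv ⊢
    intro n hn
    rw [← hf n v, hv n hn])

lemma grpCoinvKer_le_comap (ρ : Representation ℂ Γ V) (σ : Representation ℂ Γ W) (N : Subgroup Γ)
    (f : V →ₗ[ℂ] W) (hf : GRep.Equivariant ρ σ f) :
    grpCoinvKer ρ N ≤ (grpCoinvKer σ N).comap f := by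
  refine Submodule.span_le.2 ?_
  rintro w ⟨n, hn, v, rfl⟩
  simp only [SetLike.mem_coe, Submodule.mem_comap, map_sub]
  rw [hf]
  exact Submodule.subset_span ⟨n, hn, f v, rfl⟩

/-- The map induced on `N`-coinvariants by an equivariant map. -/
def grpCoinvMap (ρ : Representation ℂ Γ V) (σ : Representation ℂ Γ W) (N : Subgroup Γ)
    (f : V →ₗ[ℂ] W) (hf : GRep.Equivariant ρ σ f) :
    (V ⧸ grpCoinvKer ρ N) →ₗ[ℂ] (W ⧸ grpCoinvKer σ N) :=
  Submodule.mapQ _ _ f (grpCoinvKer_le_comap ρ σ N f hf)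

end Grp

/-! ### Tate L-factors of finite-dimensional `T`-modules. -/

section Lfactor

variable {K : Type*} [NontriviallyNormedField K]
variable {X : Type*} [AddCommGroup X] [Module ℂ X]

/-- The part of a `T`-module where the `χ`-twisted action is unramified
(trivial on the norm-one units). -/
def unrPart (τ : Representation ℂ Kˣ X) (χ : Kˣ →* ℂˣ) : Submodule ℂ X where
  carrier := {x | ∀ u : Kˣ, ‖(u : K)‖ = 1 → (χ u : ℂ) • τ u x = x}
  zero_mem' := fun u _ => by simp
  add_mem' {a b} ha hb := fun u hu => by rw [map_add, smul_add, ha u hu, hb u hu]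
  smul_mem' c x hx := fun u hu => by
    rw [map_smul, smul_comm, hx u hu]

lemma unrPart_stable (τ : Representation ℂ Kˣ X) (χ : Kˣ →* ℂˣ) (ϖ : Kˣ) :
    ∀ x ∈ unrPart τ χ, ((χ ϖ : ℂ) • τ ϖ) x ∈ unrPart τ χ := by
  intro x hx u hu
  have comm : τ u (τ ϖ x) = τ ϖ (τ u x) := by
    rw [← Module.End.mul_apply, ← map_mul, mul_comm, map_mul, Module.End.mul_apply]
  calc (χ u : ℂ) • τ u (((χ ϖ : ℂ) • τ ϖ) x)
      = (χ ϖ : ℂ) • ((χ u : ℂ) • τ u (τ ϖ x)) := by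
        rw [LinearMap.smul_apply, map_smul, smul_comm]
    _ = (χ ϖ : ℂ) • τ ϖ ((χ u : ℂ) • τ u x) := by rw [comm, map_smul]
    _ = ((χ ϖ : ℂ) • τ ϖ) x := by rw [hx u hu, LinearMap.smul_apply]

/-- The twisted uniformizer action on the unramified part. -/
def twistOp (τ : Representation ℂ Kˣ X) (χ : Kˣ →* ℂˣ) (ϖ : Kˣ) :
    ↥(unrPart τ χ) →ₗ[ℂ] ↥(unrPart τ χ) :=
  LinearMap.restrict ((χ ϖ : ℂ) • τ ϖ) (unrPart_stable τ χ ϖ)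

/-- The Tate `L`-factor `L(s, χ ⊗ X) = det(1 - q^{-s}·(χ·τ)(ϖ) | X^{unr,χ})⁻¹` of a
(finite-dimensional) `T`-module `X`, relative to a uniformizer `ϖ`. -/
def Lfactor (τ : Representation ℂ Kˣ X) (χ : Kˣ →* ℂˣ) (ϖ : Kˣ) (s : ℂ) : ℂ :=
  (LinearMap.det (LinearMap.id - (‖(ϖ : K)‖ : ℂ) ^ s • twistOp τ χ ϖ))⁻¹

end Lfactor

/-! ### The concrete `TS`-modules `𝕊`, `C_c^∞(k)`, `C_b^∞(k^×)` and `𝔼[χ]`. -/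

section Concrete

open Aff

variable (K : Type*) [NontriviallyNormedField K]

/-- The representation of `TS` on functions on `k^×`:
`(s_b g)(x) = ψ(bx) g(x)`, `(x_λ g)(x) = g(xλ)`. -/
def repCx (ψ : AddChar K ℂ) : Rep K (Kˣ → ℂ) where
  toFun g :=
    { toFun := fun f x => ψ (g.s * (x : K)) * f (x * g.t)
      map_add' := fun f₁ f₂ => by funext x; simp [mul_add]
      map_smul' := fun c f => by
        funext x
        simp only [Pi.smul_apply, smul_eq_mul, RingHom.id_apply]
        ring }
  map_one' := by
    apply LinearMap.ext; intro f; funext x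
    simp
  map_mul' g h := by
    apply LinearMap.ext; intro f; funext x
    show ψ ((g.s + (g.t : K) * h.s) * (x : K)) * f (x * (g.t * h.t))
        = ψ (g.s * (x : K)) * (ψ (h.s * ((x * g.t : Kˣ) : K)) * f (x * g.t * h.t))
    have harg : (g.s + (g.t : K) * h.s) * (x : K)
        = g.s * (x : K) + h.s * ((x * g.t : Kˣ) : K) := by
      push_cast
      ring
    rw [harg, AddChar.map_add_eq_mul, ← mul_assoc x g.t h.t]
    ring

@[simp] lemma repCx_apply (ψ : AddChar K ℂ) (g : Aff K) (f : Kˣ → ℂ) (x : Kˣ) :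
    repCx K ψ g f x = ψ (g.s * (x : K)) * f (x * g.t) := rfl

/-- The `χ`-twisted representation of `TS` on functions on `k`:
`(s_b g)(x) = ψ(bx) g(x)`, `(x_λ g)(x) = χ(λ) g(xλ)`.  (Take `χ = 1` for the
untwisted action on `C_c^∞(k)`; the module `𝔼[χ]` is `C_c^∞(k)` with the twisted action.) -/
def repCc (ψ : AddChar K ℂ) (χ : Kˣ →* ℂˣ) : Rep K (K → ℂ) where
  toFun g :=
    { toFun := fun f x => (χ g.t : ℂ) * ψ (g.s * x) * f (x * (g.t : K))
      map_add' := fun f₁ f₂ => by funext x; simp [mul_add]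
      map_smul' := fun c f => by
        funext x
        simp only [Pi.smul_apply, smul_eq_mul, RingHom.id_apply]
        ring }
  map_one' := by
    apply LinearMap.ext; intro f; funext x
    simp
  map_mul' g h := by
    apply LinearMap.ext; intro f; funext x
    show (χ (g.t * h.t) : ℂ) * ψ ((g.s + (g.t : K) * h.s) * x) * f (x * ((g.t * h.t : Kˣ) : K))
        = (χ g.t : ℂ) * ψ (g.s * x) * ((χ h.t : ℂ) * ψ (h.s * (x * (g.t : K)))
            * f (x * (g.t : K) * (h.t : K)))
    have harg : (g.s + (g.t : K) * h.s) * x = g.s * x + h.s * (x * (g.t : K)) := by ring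
    have harg2 : x * ((g.t * h.t : Kˣ) : K) = x * (g.t : K) * (h.t : K) := by
      push_cast
      ring
    rw [harg, harg2, AddChar.map_add_eq_mul, map_mul]
    push_cast
    ring

@[simp] lemma repCc_apply (ψ : AddChar K ℂ) (χ : Kˣ →* ℂˣ) (g : Aff K) (f : K → ℂ) (x : K) :
    repCc K ψ χ g f x = (χ g.t : ℂ) * ψ (g.s * x) * f (x * (g.t : K)) := rfl

/-- The one-dimensional `TS`-module `ℂ_χ` on which `S` acts trivially and `x_λ` by `χ(λ)`. -/
def chiRep (χ : Kˣ →* ℂˣ) : Rep K ℂ where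
  toFun g := (χ g.t : ℂ) • LinearMap.id
  map_one' := by
    apply LinearMap.ext; intro c
    simp
  map_mul' g h := by
    apply LinearMap.ext; intro c
    simp only [mul_t, map_mul, LinearMap.smul_apply, LinearMap.id_apply, Module.End.mul_apply,
      Units.val_mul, smul_eq_mul]
    ring

/-- `C_c^∞(k)`: locally constant, compactly supported functions on `k`. -/
def CcK : Submodule ℂ (K → ℂ) where
  carrier := {f | IsLocallyConstant f ∧ HasCompactSupport f}
  zero_mem' := ⟨IsLocallyConstant.const 0, by
    rw [hasCompactSupport_def]
    simp⟩
  add_mem' {a b} ha hb := ⟨ha.1.comp₂ hb.1 (· + ·), ha.2.add hb.2⟩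
  smul_mem' c f hf := by
    refine ⟨?_, hf.2.mono (Function.support_const_smul_subset c f)⟩
    exact hf.1.comp (fun z => c * z)

@[simp] lemma mem_CcK (f : K → ℂ) :
    f ∈ CcK K ↔ IsLocallyConstant f ∧ HasCompactSupport f := Iff.rfl

/-- `𝕊 = C_c^∞(k^×)`: locally constant, compactly supported functions on `k^×`. -/
def SSx : Submodule ℂ (Kˣ → ℂ) where
  carrier := {f | IsLocallyConstant f ∧ HasCompactSupport f}
  zero_mem' := ⟨IsLocallyConstant.const 0, by
    rw [hasCompactSupport_def]
    simp⟩
  add_mem' {a b} ha hb := ⟨ha.1.comp₂ hb.1 (· + ·), ha.2.add hb.2⟩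
  smul_mem' c f hf := by
    refine ⟨?_, hf.2.mono (Function.support_const_smul_subset c f)⟩
    exact hf.1.comp (fun z => c * z)

@[simp] lemma mem_SSx (f : Kˣ → ℂ) :
    f ∈ SSx K ↔ IsLocallyConstant f ∧ HasCompactSupport f := Iff.rfl

/-- `C_b^∞(k^×)`: locally constant functions on `k^×` whose support has compact closure
in `k`. -/
def Cb : Submodule ℂ (Kˣ → ℂ) where
  carrier := {f | IsLocallyConstant f ∧
    IsCompact (closure (((↑) : Kˣ → K) '' Function.support f))}
  zero_mem' := ⟨IsLocallyConstant.const 0, by simp⟩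
  add_mem' {a b} ha hb := by
    refine ⟨ha.1.comp₂ hb.1 (· + ·), ?_⟩
    refine IsCompact.of_isClosed_subset (ha.2.union hb.2) isClosed_closure ?_
    refine closure_minimal ?_ (ha.2.isClosed.union hb.2.isClosed)
    refine (Set.image_mono (Function.support_add _ _)).trans ?_
    rw [Set.image_union]
    exact Set.union_subset_union subset_closure subset_closure
  smul_mem' c f hf := by
    refine ⟨hf.1.comp (fun z => c * z), ?_⟩
    refine IsCompact.of_isClosed_subset hf.2 isClosed_closure ?_
    refine closure_mono ?_
    exact Set.image_mono (Function.support_const_smul_subset c f)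

@[simp] lemma mem_Cb (f : Kˣ → ℂ) :
    f ∈ Cb K ↔ IsLocallyConstant f ∧
      IsCompact (closure (((↑) : Kˣ → K) '' Function.support f)) := Iff.rfl

variable {K}

lemma SSx_invariant (ψ : AddChar K ℂ) (hψlc : IsLocallyConstant (⇑ψ)) :
    GRep.Invariant (repCx K ψ) (SSx K) := by
  rintro g f hf
  rw [mem_SSx] at hf ⊢
  obtain ⟨hlc, hcs⟩ := hf
  have heq : repCx K ψ g f
      = (fun x : Kˣ => ψ (g.s * (x : K))) * (f ∘ (Homeomorph.mulRight g.t)) := rfl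
  constructor
  · rw [heq]
    refine IsLocallyConstant.mul ?_ ?_
    · exact hψlc.comp_continuous (continuous_const.mul Units.continuous_val)
    · exact hlc.comp_continuous (Homeomorph.mulRight g.t).continuous
  · rw [heq]
    exact (hcs.comp_homeomorph (Homeomorph.mulRight g.t)).mul_left

lemma CcK_invariant (ψ : AddChar K ℂ) (hψlc : IsLocallyConstant (⇑ψ)) (χ : Kˣ →* ℂˣ) :
    GRep.Invariant (repCc K ψ χ) (CcK K) := by
  rintro g f hf
  rw [mem_CcK] at hf ⊢
  obtain ⟨hlc, hcs⟩ := hf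
  have hne : ((g.t : Kˣ) : K) ≠ 0 := g.t.ne_zero
  have heq : repCc K ψ χ g f
      = (fun x : K => (χ g.t : ℂ) * ψ (g.s * x)) * (f ∘ (Homeomorph.mulRight₀ (g.t : K) hne)) :=
    rfl
  constructor
  · rw [heq]
    refine IsLocallyConstant.mul ?_ ?_
    · exact ((hψlc.comp_continuous (continuous_const.mul continuous_id)).comp
        (fun z => (χ g.t : ℂ) * z))
    · exact hlc.comp_continuous (Homeomorph.mulRight₀ (g.t : K) hne).continuous
  · rw [heq]
    exact (hcs.comp_homeomorph (Homeomorph.mulRight₀ (g.t : K) hne)).mul_left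

/-- The `TS`-module `𝕊 = C_c^∞(k^×)`. -/
def SRep (ψ : AddChar K ℂ) (hψlc : IsLocallyConstant (⇑ψ)) : Rep K ↥(SSx K) :=
  GRep.sub (repCx K ψ) (SSx_invariant ψ hψlc)

/-- The `TS`-module `𝔼[χ]`, i.e. `C_c^∞(k)` with the `χ`-twisted action. -/
def ERep (ψ : AddChar K ℂ) (hψlc : IsLocallyConstant (⇑ψ)) (χ : Kˣ →* ℂˣ) : Rep K ↥(CcK K) :=
  GRep.sub (repCc K ψ χ) (CcK_invariant ψ hψlc χ)

/-- The `TS`-module `𝕊^s`, a direct sum of `s` copies of `𝕊`. -/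
def SRepPow (ψ : AddChar K ℂ) (hψlc : IsLocallyConstant (⇑ψ)) (s : ℕ) :
    Rep K (Fin s → ↥(SSx K)) where
  toFun g := LinearMap.pi fun i => (SRep ψ hψlc g).comp (LinearMap.proj i)
  map_one' := by
    apply LinearMap.ext; intro v; funext i
    simp
  map_mul' g h := by
    apply LinearMap.ext; intro v; funext i
    simp [map_mul]

/-- The submodule `E` of `C_b^∞(k^×)` consisting of functions which are `χ`-eigenvectors
modulo `𝕊`; the quotient `E/𝕊` is the `χ`-eigenspace of `C_b^∞(k^×)/𝕊`. -/
def quotEigen (ψ : AddChar K ℂ) (χ : Kˣ →* ℂˣ) : Submodule ℂ (Kˣ → ℂ) where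
  carrier := {f | f ∈ Cb K ∧ ∀ u : Kˣ, repCx K ψ (Aff.xT u) f - (χ u : ℂ) • f ∈ SSx K}
  zero_mem' := ⟨(Cb K).zero_mem, fun u => by simpa using (SSx K).zero_mem⟩
  add_mem' {a b} ha hb := by
    refine ⟨(Cb K).add_mem ha.1 hb.1, fun u => ?_⟩
    rw [map_add, smul_add, add_sub_add_comm]
    exact (SSx K).add_mem (ha.2 u) (hb.2 u)
  smul_mem' c f hf := by
    refine ⟨(Cb K).smul_mem c hf.1, fun u => ?_⟩
    rw [map_smul, smul_comm, ← smul_sub]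
    exact (SSx K).smul_mem c (hf.2 u)

/-- Evaluation at `0 ∈ k`, realizing the quotient map `𝔼[χ] → ℂ_χ` with kernel `𝕊`. -/
def ev0 : ↥(CcK K) →ₗ[ℂ] ℂ where
  toFun f := (f : K → ℂ) 0
  map_add' f g := rfl
  map_smul' c f := rfl

end Concrete

/-! ### The diagonal torus in GL(2). -/

section GL2

variable {K : Type*} [Field K]

/-- The diagonal element `diag(a, b)` of `GL(2, K)`. -/
def diagGL (a b : Kˣ) : Matrix.GeneralLinearGroup (Fin 2) K where
  val := Matrix.diagonal ![(a : K), (b : K)]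
  inv := Matrix.diagonal ![((a : K))⁻¹, ((b : K))⁻¹]
  val_inv := by
    ext i j
    fin_cases i <;> fin_cases j <;>
      simp [Matrix.mul_apply, Fin.sum_univ_two, Matrix.diagonal, Matrix.one_apply,
        a.ne_zero, b.ne_zero]
  inv_val := by
    ext i j
    fin_cases i <;> fin_cases j <;>
      simp [Matrix.mul_apply, Fin.sum_univ_two, Matrix.diagonal, Matrix.one_apply,
        a.ne_zero, b.ne_zero]

end GL2

section Ext11Helpers

open Aff Filter Topology

variable {K : Type*} [NontriviallyNormedField K]

lemma aux_isCompact_annulus [ProperSpace K] (ε R : ℝ) (hε : 0 < ε) :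
    IsCompact {u : Kˣ | ε ≤ ‖(u : K)‖ ∧ ‖(u : K)‖ ≤ R} := by
  have hc : IsCompact ((Metric.closedBall (0 : K) R) ×ˢ
      (MulOpposite.unop ⁻¹' (Metric.closedBall (0 : K) ε⁻¹))) := by
    refine (isCompact_closedBall _ _).prod ?_
    exact (MulOpposite.opHomeomorph (M := K)).symm.isCompact_preimage.2 (isCompact_closedBall _ _)
  have h2 := (Units.isClosedEmbedding_embedProduct (α := K)).isCompact_preimage hc
  refine h2.of_isClosed_subset ?_ ?_
  · exact (isClosed_le continuous_const (continuous_norm.comp Units.continuous_val)).inter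
      (isClosed_le (continuous_norm.comp Units.continuous_val) continuous_const)
  · rintro u ⟨h1, h2⟩
    simp only [Set.mem_preimage, Units.embedProduct_apply, Set.mem_prod, Metric.mem_closedBall,
      dist_zero_right, MulOpposite.unop_op]
    refine ⟨h2, ?_⟩
    rw [Units.val_inv_eq_inv_val, norm_inv]
    exact inv_anti₀ hε h1

lemma aux_mem_SSx_of [ProperSpace K] (f : Kˣ → ℂ) (hf : IsLocallyConstant f) (ε R : ℝ) (hε : 0 < ε)
    (h1 : ∀ x : Kˣ, ‖(x : K)‖ < ε → f x = 0) (h2 : ∀ x : Kˣ, R < ‖(x : K)‖ → f x = 0) :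
    f ∈ SSx K := by
  refine ⟨hf, ?_⟩
  refine HasCompactSupport.intro (aux_isCompact_annulus (K := K) ε R hε) ?_
  intro x hx
  by_contra h
  apply hx
  constructor
  · by_contra h'
    exact h (h1 x (not_le.1 h'))
  · by_contra h'
    exact h (h2 x (not_le.1 h'))

lemma aux_SSx_bounds (f : Kˣ → ℂ) (hf : f ∈ SSx K) :
    ∃ ε R : ℝ, 0 < ε ∧ (∀ x : Kˣ, ‖(x : K)‖ < ε → f x = 0) ∧
      (∀ x : Kˣ, R < ‖(x : K)‖ → f x = 0) := by
  have hc : IsCompact (tsupport f) := hf.2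
  obtain ⟨R, hR⟩ := (hc.image (continuous_norm.comp Units.continuous_val)).bddAbove
  obtain ⟨Q, hQ⟩ := (hc.image (continuous_norm.comp
    (Units.continuous_val.comp (continuous_inv (G := Kˣ))))).bddAbove
  have hQ1 : 0 < max Q 1 := lt_of_lt_of_le one_pos (le_max_right _ _)
  refine ⟨(max Q 1)⁻¹, R, inv_pos.2 hQ1, ?_, ?_⟩
  · intro x hx
    by_contra h
    have := hQ ⟨x, subset_tsupport f h, rfl⟩
    simp only [Function.comp_apply, Units.val_inv_eq_inv_val, norm_inv] at this
    have hxpos : 0 < ‖(x : K)‖ := norm_pos_iff.2 x.ne_zero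
    have h3 : ‖(x : K)‖⁻¹ ≤ max Q 1 := this.trans (le_max_left _ _)
    have := inv_le_of_inv_le₀ hxpos h3
    linarith
  · intro x hx
    by_contra h
    have := hR ⟨x, subset_tsupport f h, rfl⟩
    simp only [Function.comp_apply] at this
    linarith

lemma aux_continuous_sS : Continuous (fun b : K => (sS b : Aff K)) := by
  refine continuous_induced_rng.2 ?_
  exact continuous_const.prodMk continuous_id

lemma aux_continuous_xT : Continuous (fun u : Kˣ => (xT u : Aff K)) := by
  refine continuous_induced_rng.2 ?_
  exact continuous_id.prodMk continuous_const

lemma aux_chi_lc (χ : Kˣ →* ℂˣ) (hχ : SmoothMulChar χ) : IsLocallyConstant (⇑χ) := by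
  rw [IsLocallyConstant.iff_eventually_eq]
  intro x
  have h : {u : Kˣ | χ u = 1} ∈ 𝓝 (x⁻¹ * x) := by
    rw [inv_mul_cancel]
    exact hχ.mem_nhds (map_one χ)
  have hc : Tendsto (fun y : Kˣ => x⁻¹ * y) (𝓝 x) (𝓝 (x⁻¹ * x)) :=
    (continuous_const.mul continuous_id).tendsto x
  filter_upwards [hc h] with y hy
  have : χ (x⁻¹ * y) = 1 := hy
  rw [map_mul, map_inv, inv_mul_eq_one] at this
  exact this.symm

/-- A function satisfying the twisted equation modulo `𝕊` is a multiple of `χ` near `0`. -/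
lemma aux_near_zero [ProperSpace K] (χ : Kˣ →* ℂˣ) (F : Kˣ → ℂ) (W : Set Kˣ) (hW : W ∈ 𝓝 (1 : Kˣ))
    (hFW : ∀ w ∈ W, ∀ x, F (x * w) = (χ w : ℂ) * F x)
    (hF : ∀ u : Kˣ, ∃ ε : ℝ, 0 < ε ∧ ∀ x : Kˣ, ‖(x : K)‖ < ε → F (x * u) = (χ u : ℂ) * F x) :
    ∃ (c : ℂ) (ε : ℝ), 0 < ε ∧ ∀ x : Kˣ, ‖(x : K)‖ < ε → F x = c * (χ x : ℂ) := by
  obtain ⟨t, ht0, ht1⟩ := NormedField.exists_norm_lt_one K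
  have htne : t ≠ 0 := norm_pos_iff.1 ht0
  have key : ∃ ε : ℝ, 0 < ε ∧ ∀ x : Kˣ, ‖(x : K)‖ < ε →
      ∀ u ∈ {u : Kˣ | ‖t‖ ≤ ‖(u : K)‖ ∧ ‖(u : K)‖ ≤ 1}, F (x * u) = (χ u : ℂ) * F x := by
    refine (aux_isCompact_annulus (K := K) ‖t‖ 1 ht0).induction_on
      (p := fun A => ∃ ε : ℝ, 0 < ε ∧ ∀ x : Kˣ, ‖(x : K)‖ < ε →
      ∀ u ∈ A, F (x * u) = (χ u : ℂ) * F x) ?_ ?_ ?_ ?_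
    · exact ⟨1, one_pos, fun x _ u hu => hu.elim⟩
    · rintro A B hAB ⟨ε, hε, h⟩
      exact ⟨ε, hε, fun x hx u hu => h x hx u (hAB hu)⟩
    · rintro A B ⟨ε, hε, h⟩ ⟨ε', hε', h'⟩
      refine ⟨min ε ε', lt_min hε hε', fun x hx u hu => ?_⟩
      rcases hu with hu | hu
      · exact h x (hx.trans_le (min_le_left _ _)) u hu
      · exact h' x (hx.trans_le (min_le_right _ _)) u hu
    · intro u₀ _
      obtain ⟨ε, hε, h⟩ := hF u₀
      refine ⟨(fun y : Kˣ => u₀⁻¹ * y) ⁻¹' W, mem_nhdsWithin_of_mem_nhds ?_, ε, hε, ?_⟩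
      · have hc : Tendsto (fun y : Kˣ => u₀⁻¹ * y) (𝓝 u₀) (𝓝 (u₀⁻¹ * u₀)) :=
          (continuous_const.mul continuous_id).tendsto u₀
        rw [inv_mul_cancel] at hc
        exact hc hW
      · intro x hx u hu
        have h1 := hFW _ hu (x * u₀)
        rw [mul_assoc, mul_inv_cancel_left, h x hx, ← mul_assoc, ← Units.val_mul, ← map_mul,
          mul_comm (u₀⁻¹ * u) u₀, mul_inv_cancel_left] at h1
        exact h1
  obtain ⟨ε, hε, h⟩ := key
  have iter : ∀ n : ℕ, ∀ u : Kˣ, ‖t‖ ^ n ≤ ‖(u : K)‖ → ‖(u : K)‖ ≤ 1 → ∀ x : Kˣ, ‖(x : K)‖ < ε →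
      F (x * u) = (χ u : ℂ) * F x := by
    intro n
    induction n with
    | zero =>
      intro u h1 h2 x hx
      exact h x hx u ⟨ht1.le.trans (by simpa using h1), h2⟩
    | succ n ih =>
      intro u h1 h2 x hx
      by_cases hu : ‖t‖ ≤ ‖(u : K)‖
      · exact h x hx u ⟨hu, h2⟩
      · push Not at hu
        set τ : Kˣ := Units.mk0 t htne with hτ
        have hτn : ‖(τ : K)‖ = ‖t‖ := rfl
        have e : u = τ * (τ⁻¹ * u) := by simp
        have hn : ‖((τ⁻¹ * u : Kˣ) : K)‖ = ‖t‖⁻¹ * ‖(u : K)‖ := by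
          rw [Units.val_mul, norm_mul, Units.val_inv_eq_inv_val, norm_inv, hτn]
        have hxτ : ‖((x * τ : Kˣ) : K)‖ < ε := by
          rw [Units.val_mul, norm_mul, hτn]
          have := mul_le_of_le_one_right (norm_nonneg (x : K)) ht1.le
          linarith
        have h3 := ih (τ⁻¹ * u) (by
          rw [hn, le_inv_mul_iff₀ ht0]; rw [pow_succ'] at h1; exact h1) (by
          rw [hn, inv_mul_le_iff₀ ht0]; linarith) (x * τ) hxτ
        rw [h x hx τ ⟨le_rfl, ht1.le⟩, mul_assoc, mul_inv_cancel_left, ← mul_assoc,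
          ← Units.val_mul, ← map_mul, mul_comm (τ⁻¹ * u), mul_inv_cancel_left] at h3
        exact h3
  obtain ⟨z, hz0, hz1⟩ := NormedField.exists_norm_lt K hε
  set x₀ : Kˣ := Units.mk0 z (norm_pos_iff.1 hz0) with hx₀
  have hx₀n : ‖(x₀ : K)‖ = ‖z‖ := rfl
  refine ⟨F x₀ * ((χ x₀)⁻¹ : ℂˣ), ‖z‖, hz0, fun y hy => ?_⟩
  have hyn : ‖((x₀⁻¹ * y : Kˣ) : K)‖ = ‖z‖⁻¹ * ‖(y : K)‖ := by
    rw [Units.val_mul, norm_mul, Units.val_inv_eq_inv_val, norm_inv, hx₀n]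
  have hypos : 0 < ‖((x₀⁻¹ * y : Kˣ) : K)‖ := norm_pos_iff.2 (Units.ne_zero _)
  obtain ⟨n, hn⟩ := exists_pow_lt_of_lt_one hypos ht1
  have h4 := iter n (x₀⁻¹ * y) hn.le (by
    rw [hyn, inv_mul_le_iff₀ hz0]; linarith) x₀ (by rw [hx₀n]; exact hz1)
  rw [mul_inv_cancel_left] at h4
  rw [h4, map_mul, map_inv, Units.val_mul]
  ring

/-- The additive cocycle attached to an extension is a coboundary of a function on `k^×`. -/
lemma aux_cocycle (ψ : AddChar K ℂ) (hψlc : IsLocallyConstant (⇑ψ)) (a : K) (ha : ψ a ≠ 1)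
    (f : K → Kˣ → ℂ) (hf : ∀ b, IsLocallyConstant (f b))
    (hadd : ∀ b c x, f (b + c) x = f b x + ψ (b * x) * f c x) :
    ∃ F : Kˣ → ℂ, IsLocallyConstant F ∧ ∀ b x, f b x = (ψ (b * x) - 1) * F x := by
  have ha' : ψ a - 1 ≠ 0 := sub_ne_zero.2 ha
  have key : ∀ b (x : Kˣ), f b x = (ψ (b * x) - 1) * (f (a * ((x⁻¹ : Kˣ) : K)) x / (ψ a - 1)) := by
    intro b x
    have h1 := hadd b (a * ((x⁻¹ : Kˣ) : K)) x
    have h2 := hadd (a * ((x⁻¹ : Kˣ) : K)) b x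
    rw [add_comm, h1] at h2
    have h3 : a * ((x⁻¹ : Kˣ) : K) * x = a := by simp [mul_assoc]
    rw [h3] at h2
    field_simp
    linear_combination -h2
  refine ⟨fun x => f (a * ((x⁻¹ : Kˣ) : K)) x / (ψ a - 1), ?_, key⟩
  rw [IsLocallyConstant.iff_eventually_eq]
  intro x
  have hx : a * ((x⁻¹ : Kˣ) : K) * x = a := by simp [mul_assoc]
  have e1 := ((IsLocallyConstant.iff_eventually_eq _).1 (hf (a * ((x⁻¹ : Kˣ) : K)))) x
  have e2 := ((IsLocallyConstant.iff_eventually_eq _).1 (hψlc.comp_continuous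
    ((continuous_const (y := a * ((x⁻¹ : Kˣ) : K))).mul (Units.continuous_val (M := K))))) x
  filter_upwards [e1, e2] with y h1 h2
  have h3 : ψ (a * ((x⁻¹ : Kˣ) : K) * y) = ψ (a * ((x⁻¹ : Kˣ) : K) * x) := h2
  have h4 := key (a * ((x⁻¹ : Kˣ) : K)) y
  rw [h3, hx, h1] at h4
  rw [h4]
  field_simp

lemma aux_CcK_of [ProperSpace K] (χ : Kˣ →* ℂˣ) (hχ : SmoothMulChar χ) (G : Kˣ → ℂ)
    (hG : IsLocallyConstant G) (d : ℂ) (ε R : ℝ) (hε : 0 < ε)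
    (h1 : ∀ x : Kˣ, ‖(x : K)‖ < ε → G x = d * (χ x : ℂ)) (h2 : ∀ x : Kˣ, R < ‖(x : K)‖ → G x = 0) :
    (fun x : K => if h : x = 0 then d else ((χ (Units.mk0 x h))⁻¹ : ℂˣ) * G (Units.mk0 x h))
      ∈ CcK K := by
  constructor
  · rw [IsLocallyConstant.iff_eventually_eq]
    intro x
    by_cases hx : x = 0
    · subst hx
      filter_upwards [Metric.ball_mem_nhds (0 : K) hε] with y hy
      by_cases hy0 : y = 0
      · simp [hy0]
      · have hy1 : ‖((Units.mk0 y hy0 : Kˣ) : K)‖ < ε := by simpa using hy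
        simp only [hy0, dite_false, dite_true, h1 _ hy1]
        rw [mul_comm, mul_assoc]
        simp
    · have hl : IsLocallyConstant (fun u : Kˣ => ((χ u)⁻¹ : ℂˣ) * G u) :=
        (((aux_chi_lc χ hχ).comp (fun z => ((z⁻¹ : ℂˣ) : ℂ)))).mul hG
      have e1 := (IsLocallyConstant.iff_eventually_eq _).1 hl (Units.mk0 x hx)
      have e2 : ∀ᶠ y in 𝓝 x, ∃ u : Kˣ, (u : K) = y ∧
          (((χ u)⁻¹ : ℂˣ) : ℂ) * G u
            = ((χ (Units.mk0 x hx))⁻¹ : ℂˣ) * G (Units.mk0 x hx) := by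
        have := (Units.isOpenEmbedding_val (R := K)).isOpenMap.image_mem_nhds e1
        filter_upwards [this] with y hy
        obtain ⟨u, hu, rfl⟩ := hy
        exact ⟨u, rfl, hu⟩
      filter_upwards [e2] with y hy
      obtain ⟨u, rfl, hu⟩ := hy
      simp only [u.ne_zero, hx, dite_false, Units.mk0_val]
      exact hu
  · refine HasCompactSupport.intro (isCompact_closedBall (0 : K) (max R 0)) ?_
    intro x hx
    simp only [Metric.mem_closedBall, dist_zero_right, not_le, max_lt_iff] at hx
    have hx0 : x ≠ 0 := norm_pos_iff.1 hx.2
    simp only [hx0, dite_false]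
    rw [h2 _ (by simpa using hx.1), mul_zero]

end Ext11Helpers

section Statements

open Aff

variable {K : Type*} [NontriviallyNormedField K] [IsUltrametricDist K] [ProperSpace K]

theorem statement11
    (hchar : (2 : K) ≠ 0)
    (ψ : AddChar K ℂ) (hψlc : IsLocallyConstant (⇑ψ)) (hψne : ψ ≠ 1)
    (χ : Kˣ →* ℂˣ) (hχ : SmoothMulChar χ)
    {V : Type*} [AddCommGroup V] [Module ℂ V]
    (ρ : Rep K V) (hρ : IsSmoothRep ρ)
    (ι : ↥(SSx K) →ₗ[ℂ] V) (hι : GRep.Equivariant (SRep ψ hψlc) ρ ι)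
    (hιinj : Function.Injective ι)
    (π : V →ₗ[ℂ] ℂ) (hπ : GRep.Equivariant ρ (chiRep K χ) π)
    (hπsurj : Function.Surjective π) (hexact : LinearMap.ker π = LinearMap.range ι) :
    ((∃ σ : ℂ →ₗ[ℂ] V, GRep.Equivariant (chiRep K χ) ρ σ ∧ π.comp σ = LinearMap.id) ∨
      GRep.Iso ρ (ERep ψ hψlc χ)) ∧
    ¬ ∃ σ : ℂ →ₗ[ℂ] ↥(CcK K), GRep.Equivariant (chiRep K χ) (ERep ψ hψlc χ) σ ∧
        (ev0 (K := K)).comp σ = LinearMap.id := by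
  obtain ⟨a, ha⟩ : ∃ a, ψ a ≠ 1 := by
    by_contra h
    push Not at h
    exact hψne (by ext x; simp [h x])
  constructor
  swap
  · -- nonsplitness
    rintro ⟨σ, hσ, hσ1⟩
    have h0 : ((σ 1 : ↥(CcK K)) : K → ℂ) 0 = 1 := by
      have := LinearMap.congr_fun hσ1 1
      exact this
    have hz : ∀ x : K, x ≠ 0 → ((σ 1 : ↥(CcK K)) : K → ℂ) x = 0 := by
      intro x hx
      have h1 := hσ (sS (a * x⁻¹)) 1
      have h2 : chiRep K χ (sS (a * x⁻¹)) 1 = 1 := by simp [chiRep]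
      rw [h2] at h1
      have h3 := congrFun (congrArg Subtype.val h1) x
      have h4 : ((ERep ψ hψlc χ (sS (a * x⁻¹)) (σ 1) : ↥(CcK K)) : K → ℂ) x
          = ψ a * ((σ 1 : ↥(CcK K)) : K → ℂ) x := by
        simp [ERep, mul_assoc, inv_mul_cancel₀ hx]
      rw [h4] at h3
      have h5 : (ψ a - 1) * ((σ 1 : ↥(CcK K)) : K → ℂ) x = 0 := by
        rw [sub_mul, ← h3, one_mul, sub_self]
      exact (mul_eq_zero.1 h5).resolve_left (sub_ne_zero.2 ha)
    have hlc := (IsLocallyConstant.iff_eventually_eq _).1 (σ 1).2.1 0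
    obtain ⟨ε, hε, hb⟩ := Metric.eventually_nhds_iff.1 hlc
    obtain ⟨z, hz0, hz1⟩ := NormedField.exists_norm_lt K hε
    have := hb (y := z) (by simpa using hz1)
    rw [hz z (norm_pos_iff.1 hz0), h0] at this
    exact zero_ne_one this
  -- the classification
  obtain ⟨v, hv⟩ := hπsurj 1
  have hker : ∀ w : V, π w = 0 → ∃ f : ↥(SSx K), ι f = w := by
    intro w hw
    have : w ∈ LinearMap.range ι := by rw [← hexact]; exact hw
    exact this
  have hπι : ∀ f, π (ι f) = 0 := by
    intro f
    have : ι f ∈ LinearMap.ker π := by rw [hexact]; exact ⟨f, rfl⟩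
    exact this
  have hπs : ∀ b w, π (ρ (sS b) w) = π w := by
    intro b w
    rw [hπ]; simp [chiRep]
  have hπx : ∀ u w, π (ρ (xT u) w) = (χ u : ℂ) * π w := by
    intro u w
    rw [hπ]; simp [chiRep]
  have hfex : ∀ b : K, ∃ f : ↥(SSx K), ι f = ρ (sS b) v - v := fun b =>
    hker _ (by rw [map_sub, hπs, sub_self])
  choose f hf using hfex
  have hhex : ∀ u : Kˣ, ∃ f : ↥(SSx K), ι f = ρ (xT u) v - (χ u : ℂ) • v := fun u =>
    hker _ (by rw [map_sub, hπx, map_smul, hv, smul_eq_mul, sub_self])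
  choose h hh using hhex
  have hfv : ∀ b, ρ (sS b) v = v + ι (f b) := fun b => by rw [hf]; abel
  have hhv : ∀ u, ρ (xT u) v = (χ u : ℂ) • v + ι (h u) := fun u => by rw [hh]; abel
  have hSs : ∀ b (g : ↥(SSx K)) x, (SRep ψ hψlc (sS b) g : Kˣ → ℂ) x
      = ψ (b * x) * (g : Kˣ → ℂ) x := by
    intro b g x
    simp [SRep]
  have hSx : ∀ u (g : ↥(SSx K)) x, (SRep ψ hψlc (xT u) g : Kˣ → ℂ) x
      = (g : Kˣ → ℂ) (x * u) := by
    intro b g x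
    simp [SRep]
  have hadd : ∀ b c (x : Kˣ), (f (b + c) : Kˣ → ℂ) x
      = (f b : Kˣ → ℂ) x + ψ (b * x) * (f c : Kˣ → ℂ) x := by
    intro b c x
    have e : f (b + c) = f b + SRep ψ hψlc (sS b) (f c) := by
      apply hιinj
      have hbc : (sS (b + c) : Aff K) = sS b * sS c := by ext <;> simp
      rw [map_add, hι, hf (b + c), hbc, map_mul, Module.End.mul_apply, hfv c, map_add, hfv b]
      abel
    rw [e, ← hSs]
    rfl
  obtain ⟨F, hFlc, hF⟩ := aux_cocycle ψ hψlc a ha (fun b => (f b : Kˣ → ℂ))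
    (fun b => (f b).2.1) hadd
  -- the torus relation
  have hT : ∀ (u x : Kˣ), F (x * u) = (χ u : ℂ) * F x + (h u : Kˣ → ℂ) x := by
    intro u x
    set b : K := a * (((x * u)⁻¹ : Kˣ) : K) with hb
    have e : (h u) + SRep ψ hψlc (xT u) (f b)
        = (χ u : ℂ) • f ((u : K) * b) + SRep ψ hψlc (sS ((u : K) * b)) (h u) := by
      apply hιinj
      have e1 : ρ (xT u) (ρ (sS b) v) = ρ (sS ((u : K) * b)) (ρ (xT u) v) := by
        rw [← Module.End.mul_apply, ← map_mul, mul_sS, map_mul, Module.End.mul_apply]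
        rfl
      rw [hfv b, map_add, hhv u, map_add, map_smul, hfv] at e1
      rw [map_add, map_add, hι, hι, map_smul]
      rw [smul_add, add_assoc, add_assoc] at e1
      exact add_left_cancel e1
    have e2 := congrFun (congrArg Subtype.val e) x
    have e3 : (h u : Kˣ → ℂ) x + (f b : Kˣ → ℂ) (x * u)
        = (χ u : ℂ) * (f ((u : K) * b) : Kˣ → ℂ) x + ψ ((u : K) * b * x) * (h u : Kˣ → ℂ) x := by
      rw [← hSx, ← hSs]
      exact e2
    have hb1 : b * ((x * u : Kˣ) : K) = a := by
      rw [hb, mul_assoc, ← Units.val_mul, inv_mul_cancel]; simp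
    have hb2 : (u : K) * b * x = a := by
      rw [← hb1, Units.val_mul]; ring
    have g1 := hF b (x * u)
    have g2 := hF ((u : K) * b) x
    rw [hb1] at g1
    rw [hb2] at g2 e3
    rw [g1, g2] at e3
    apply mul_left_cancel₀ (sub_ne_zero.2 ha)
    linear_combination e3
  -- boundedness of the support of `F`
  obtain ⟨R, hR⟩ : ∃ R : ℝ, ∀ x : Kˣ, R < ‖(x : K)‖ → F x = 0 := by
    have hop : {b : K | ρ (sS b) v = v} ∈ nhds (0 : K) := by
      refine ((hρ v).preimage aux_continuous_sS).mem_nhds ?_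
      have : (sS (0 : K) : Aff K) = 1 := rfl
      simp [this]
    obtain ⟨r, hr, hball⟩ := Metric.mem_nhds_iff.1 hop
    refine ⟨‖a‖ / r, fun x hx => ?_⟩
    have hxpos : 0 < ‖(x : K)‖ := norm_pos_iff.2 x.ne_zero
    have hmem : a * ((x⁻¹ : Kˣ) : K) ∈ Metric.ball (0 : K) r := by
      rw [Metric.mem_ball, dist_zero_right, norm_mul, Units.val_inv_eq_inv_val, norm_inv,
        ← div_eq_mul_inv, div_lt_iff₀ hxpos]
      rw [div_lt_iff₀ hr] at hx
      linarith
    have hfix : ρ (sS (a * ((x⁻¹ : Kˣ) : K))) v = v := hball hmem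
    have hf0 : f (a * ((x⁻¹ : Kˣ) : K)) = 0 := by
      apply hιinj
      rw [hf, hfix, sub_self, map_zero]
    have g := hF (a * ((x⁻¹ : Kˣ) : K)) x
    have hx1 : a * ((x⁻¹ : Kˣ) : K) * x = a := by simp
    rw [hf0, hx1] at g
    have g' : 0 = (ψ a - 1) * F x := g
    exact (mul_eq_zero.1 g'.symm).resolve_left (sub_ne_zero.2 ha)
  -- behaviour near zero
  obtain ⟨c, ε, hε, hc⟩ := aux_near_zero χ F {u | ρ (xT u) v = v ∧ χ u = 1} (by
      refine IsOpen.mem_nhds (((hρ v).preimage aux_continuous_xT).inter hχ) ?_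
      have : (xT (1 : Kˣ) : Aff K) = 1 := rfl
      simp [this])
    (by
      rintro w ⟨hw1, hw2⟩ x
      have h0 : h w = 0 := by
        apply hιinj
        rw [hh, hw1, hw2, map_zero]; simp
      rw [hT w x, h0]; simp)
    (by
      intro u
      obtain ⟨ε, _, hε, h1, _⟩ := aux_SSx_bounds _ (h u).2
      exact ⟨ε, hε, fun x hx => by rw [hT u x, h1 x hx, add_zero]⟩)
  by_cases hc0 : c = 0
  · left
    have hFS : F ∈ SSx K := aux_mem_SSx_of F hFlc ε R hε
      (fun x hx => by rw [hc x hx, hc0, zero_mul]) hR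
    set F' : ↥(SSx K) := ⟨F, hFS⟩ with hF'
    have hs : ∀ b, ρ (sS b) (v - ι F') = v - ι F' := by
      intro b
      have e : f b + F' = SRep ψ hψlc (sS b) F' := by
        apply Subtype.ext; funext x
        rw [hSs]
        have := hF b x
        change (f b : Kˣ → ℂ) x + F x = ψ (b * x) * F x
        rw [this]; ring
      rw [map_sub, hfv, ← hι, ← e, map_add]; abel
    have hx : ∀ u, ρ (xT u) (v - ι F') = (χ u : ℂ) • (v - ι F') := by
      intro u
      have e : (χ u : ℂ) • F' + h u = SRep ψ hψlc (xT u) F' := by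
        apply Subtype.ext; funext x
        rw [hSx]
        exact (hT u x).symm
      rw [map_sub, hhv, ← hι, ← e, map_add, smul_sub, map_smul]; abel
    refine ⟨LinearMap.toSpanSingleton ℂ V (v - ι F'), ?_, ?_⟩
    · intro g z
      rw [LinearMap.toSpanSingleton_apply, LinearMap.toSpanSingleton_apply, map_smul]
      have : ρ g (v - ι F') = (χ g.t : ℂ) • (v - ι F') := by
        rw [aff_decomp g, map_mul, Module.End.mul_apply, hs, hx]
        simp
      rw [this, smul_smul]
      congr 1
      simp [chiRep, mul_comm]
    · apply LinearMap.ext_ring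
      simp [hπι, hv]
  right
  -- the projection of `V` to `𝕊` along `v`
  set j : V →ₗ[ℂ] ↥(SSx K) := (LinearEquiv.ofInjective ι hιinj).symm.toLinearMap.comp
    ((LinearMap.id - π.smulRight v).codRestrict (LinearMap.range ι) (fun w => by
      rw [← hexact, LinearMap.mem_ker]
      simp [hv])) with hj
  have hjι : ∀ w, ι (j w) = w - π w • v := by
    intro w
    have := LinearEquiv.apply_symm_apply (LinearEquiv.ofInjective ι hιinj)
      (((LinearMap.id - π.smulRight v).codRestrict (LinearMap.range ι) (fun w => by
      rw [← hexact, LinearMap.mem_ker]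
      simp [hv])) w)
    exact congrArg Subtype.val this
  have hw : ∀ w, w = π w • v + ι (j w) := fun w => by rw [hjι]; abel
  have hj1 : ∀ (z : ℂ) (g : ↥(SSx K)), j (z • v + ι g) = g := by
    intro z g
    apply hιinj
    rw [hjι]
    simp [hv, hπι]
  set φ : V → Kˣ → ℂ := fun w x => π w * F x + (j w : Kˣ → ℂ) x with hφ
  have hφadd : ∀ w w' x, φ (w + w') x = φ w x + φ w' x := by
    intro w w' x
    simp only [hφ, map_add, Submodule.coe_add, Pi.add_apply]; ring
  have hφsmul : ∀ (z : ℂ) w x, φ (z • w) x = z * φ w x := by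
    intro z w x
    simp only [hφ, map_smul, Submodule.coe_smul, Pi.smul_apply, smul_eq_mul]; ring
  have hφs : ∀ b w x, φ (ρ (sS b) w) x = ψ (b * x) * φ w x := by
    intro b w x
    have e : ρ (sS b) w = π w • v + ι (π w • f b + SRep ψ hψlc (sS b) (j w)) := by
      conv_lhs => rw [hw w]
      rw [map_add, map_smul, hfv, map_add, hι, map_smul, smul_add, add_assoc]
    have e2 : j (ρ (sS b) w) = π w • f b + SRep ψ hψlc (sS b) (j w) := by
      rw [e, hj1]
    have e3 : (j (ρ (sS b) w) : Kˣ → ℂ) x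
        = π w * (f b : Kˣ → ℂ) x + ψ (b * x) * (j w : Kˣ → ℂ) x := by
      rw [e2, ← hSs]; rfl
    have g := hF b x
    simp only [hφ]
    rw [e3, hπs, g]; ring
  have hφx : ∀ u w x, φ (ρ (xT u) w) x = φ w (x * u) := by
    intro u w x
    have e : ρ (xT u) w = (π w * (χ u : ℂ)) • v + ι (π w • h u + SRep ψ hψlc (xT u) (j w)) := by
      conv_lhs => rw [hw w]
      rw [map_add, map_smul, hhv, map_add, hι, map_smul, smul_add, smul_smul, add_assoc]
    have e2 : j (ρ (xT u) w) = π w • h u + SRep ψ hψlc (xT u) (j w) := by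
      rw [e, hj1]
    have e3 : (j (ρ (xT u) w) : Kˣ → ℂ) x
        = π w * (h u : Kˣ → ℂ) x + (j w : Kˣ → ℂ) (x * u) := by
      rw [e2, ← hSx]; rfl
    simp only [hφ]
    rw [e3, hπx, hT u x]; ring
  have hmem : ∀ w, (fun x : K => if hx : x = 0 then c * π w
      else ((χ (Units.mk0 x hx))⁻¹ : ℂˣ) * φ w (Units.mk0 x hx)) ∈ CcK K := by
    intro w
    obtain ⟨ε', R', hε', h1, h2⟩ := aux_SSx_bounds _ (j w).2
    refine aux_CcK_of χ hχ (φ w) ?_ (c * π w) (min ε ε') (max R R') (lt_min hε hε') ?_ ?_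
    · exact (hFlc.comp (fun z => π w * z)).add (j w).2.1
    · intro x hx
      simp only [hφ]
      rw [hc x (hx.trans_le (min_le_left _ _)), h1 x (hx.trans_le (min_le_right _ _))]
      ring
    · intro x hx
      simp only [hφ]
      rw [hR x ((le_max_left _ _).trans_lt hx), h2 x ((le_max_right _ _).trans_lt hx)]
      ring
  set E : V →ₗ[ℂ] ↥(CcK K) :=
    { toFun := fun w => ⟨_, hmem w⟩
      map_add' := fun w w' => by
        apply Subtype.ext; funext x
        by_cases hx : x = 0
        · simp [hx, mul_add]
        · simp [hx, hφadd, mul_add]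
      map_smul' := fun z w => by
        apply Subtype.ext; funext x
        by_cases hx : x = 0
        · simp [hx]; ring
        · simp [hx, hφsmul]; ring } with hE
  have hE0 : ∀ w, (E w : K → ℂ) 0 = c * π w := by
    intro w; simp [hE]
  have hEx : ∀ w (x : Kˣ), (E w : K → ℂ) (x : K) = ((χ x)⁻¹ : ℂˣ) * φ w x := by
    intro w x
    simp [hE]
  have hφι : ∀ (z : ℂ) (g : ↥(SSx K)) x, φ (z • v + ι g) x = z * F x + (g : Kˣ → ℂ) x := by
    intro z g x
    simp only [hφ]
    rw [hj1]
    simp [hπι, hv]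
  have hbij : Function.Bijective E := by
    constructor
    · rw [← LinearMap.ker_eq_bot, LinearMap.ker_eq_bot']
      intro w hw0
      have h1 : π w = 0 := by
        have := hE0 w
        rw [hw0] at this
        exact (mul_eq_zero.1 this.symm).resolve_left hc0
      have h2 : j w = 0 := by
        apply Subtype.ext; funext x
        have := hEx w x
        rw [hw0] at this
        have h3 := (mul_eq_zero.1 this.symm).resolve_left (Units.ne_zero _)
        simp only [hφ, h1, zero_mul, zero_add] at h3
        exact h3
      rw [hw w, h1, h2]; simp
    · intro g
      obtain ⟨ε', hε', hb⟩ := Metric.eventually_nhds_iff.1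
        ((IsLocallyConstant.iff_eventually_eq _).1 g.2.1 0)
      obtain ⟨R', hR'⟩ := (IsCompact.isBounded (show IsCompact (tsupport (g : K → ℂ)) from
        g.2.2)).exists_norm_le
      have hm : (fun x : Kˣ => (χ x : ℂ) * (g : K → ℂ) x
          - (c⁻¹ * (g : K → ℂ) 0) * F x) ∈ SSx K := by
        refine aux_mem_SSx_of _ ?_ (min ε ε') (max R R') (lt_min hε hε') ?_ ?_
        · refine IsLocallyConstant.sub (IsLocallyConstant.mul ?_ ?_) ?_
          · exact (aux_chi_lc χ hχ).comp (fun z : ℂˣ => (z : ℂ))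
          · exact g.2.1.comp_continuous Units.continuous_val
          · exact hFlc.comp (fun z => (c⁻¹ * (g : K → ℂ) 0) * z)
        · intro x hx
          have h1 := hb (y := (x : K)) (by simpa using hx.trans_le (min_le_right _ _))
          rw [h1, hc x (hx.trans_le (min_le_left _ _))]
          field_simp
          ring
        · intro x hx
          have h1 : (g : K → ℂ) x = 0 := by
            by_contra hne
            have := hR' x (subset_tsupport _ hne)
            have := (le_max_right R R').trans_lt hx
            linarith
          rw [h1, hR x ((le_max_left _ _).trans_lt hx)]
          ring
      refine ⟨(c⁻¹ * (g : K → ℂ) 0) • v + ι ⟨_, hm⟩, ?_⟩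
      apply Subtype.ext; funext x
      by_cases hx : x = 0
      · rw [hx, hE0]
        simp [hπι, hv, hc0]
      · have := hEx ((c⁻¹ * (g : K → ℂ) 0) • v + ι ⟨_, hm⟩) (Units.mk0 x hx)
        rw [hφι] at this
        simp only [Units.val_mk0] at this
        rw [this]
        simp
  refine ⟨LinearEquiv.ofBijective E hbij, ?_⟩
  intro g w
  change E (ρ g w) = ERep ψ hψlc χ g (E w)
  have hEs : ∀ b w, E (ρ (sS b) w) = ERep ψ hψlc χ (sS b) (E w) := by
    intro b w
    apply Subtype.ext; funext x
    by_cases hx : x = 0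
    · rw [hx, hE0, hπs]
      simp [ERep, hE0]
    · obtain ⟨y, rfl⟩ : ∃ y : Kˣ, (y : K) = x := ⟨Units.mk0 x hx, rfl⟩
      rw [hEx, hφs]
      simp only [ERep, GRep.sub_apply, repCc_apply, sS_t, sS_s, Units.val_one, mul_one, map_one,
        one_mul, hEx]
      ring
  have hEt : ∀ u w, E (ρ (xT u) w) = ERep ψ hψlc χ (xT u) (E w) := by
    intro u w
    apply Subtype.ext; funext x
    by_cases hx : x = 0
    · rw [hx, hE0, hπx]
      simp only [ERep, GRep.sub_apply, repCc_apply, xT_t, xT_s, zero_mul, AddChar.map_zero_eq_one,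
        hE0]
      ring
    · obtain ⟨y, rfl⟩ : ∃ y : Kˣ, (y : K) = x := ⟨Units.mk0 x hx, rfl⟩
      rw [hEx, hφx]
      simp only [ERep, GRep.sub_apply, repCc_apply, xT_t, xT_s, zero_mul, AddChar.map_zero_eq_one]
      rw [← Units.val_mul, hEx, map_mul, mul_inv, Units.val_mul]
      have : (χ u : ℂ) * ((χ u)⁻¹ : ℂˣ) = 1 := by simp
      linear_combination (-((χ y)⁻¹ : ℂˣ) * φ w (y * u)) * this
  rw [aff_decomp g, map_mul, Module.End.mul_apply, hEt, hEs, map_mul, Module.End.mul_apply]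

end Statements

end PSW
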